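/- Maximum principle for order-reconstruction solutions: let l > 0, c > 0, and let Q₁₁, M₁ : ℝ → ℝ be twice continuously differentiable on [−1,1], satisfy on (−1,1) the system l·Q₁₁'' = 4Q₁₁(Q₁₁²−1) − cM₁² and l·M₁'' = M₁(M₁²−1) − 2cQ₁₁M₁, and satisfy the boundary conditions Q₁₁(−1)=M₁(−1)=1, Q₁₁(1)=M₁(1)=−1. Then for all y ∈ [−1,1]: |Q₁₁(y)| ≤ ρ*(c) and M₁(y)² ≤ 1 + 2c·ρ*(c). -/

import Mathlib

open Set

/-- Second-order necessary condition at a local maximum. -/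
theorem IsLocalMax.deriv_deriv_nonpos {f : ℝ → ℝ} {a : ℝ} (h : IsLocalMax f a)
    (hf : ContinuousAt f a) : deriv (deriv f) a ≤ 0 := by
  by_contra! hpos
  have hmin : IsLocalMin f a := isLocalMin_of_deriv_deriv_pos hpos h.deriv_eq_zero hf
  have hconst : f =ᶠ[nhds a] fun _ => f a := by
    filter_upwards [h, hmin] with x hx hx' using le_antisymm hx hx'
  have hzero : deriv (deriv f) a = 0 := by
    rw [hconst.deriv.deriv_eq]
    simp
  exact hpos.ne' hzero

/-- Second-order necessary condition at a local minimum. -/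
theorem IsLocalMin.deriv_deriv_nonneg {f : ℝ → ℝ} {a : ℝ} (h : IsLocalMin f a)
    (hf : ContinuousAt f a) : 0 ≤ deriv (deriv f) a := by
  have := h.neg.deriv_deriv_nonpos hf.neg
  have hneg : deriv (deriv fun x => -f x) a = -deriv (deriv f) a := by
    rw [deriv.fun_neg', deriv.fun_neg]
  linarith

/-- Maximum principle for order-reconstruction solutions: `|Q₁₁| ≤ ρ*(c)` and
`M₁² ≤ 1 + 2cρ*(c)`, where `ρ*(c)` is the unique positive root of
`x³ − (1 + c²/2)x − c/4`. -/
theorem or_maximum_principle (l c ρStar : ℝ) (hl : 0 < l) (hc : 0 < c)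
    (hρpos : 0 < ρStar)
    (hρroot : ρStar ^ 3 - (1 + c ^ 2 / 2) * ρStar - c / 4 = 0)
    (Q11 M1 : ℝ → ℝ)
    (hQ11 : ContDiffOn ℝ 2 Q11 (Icc (-1) 1))
    (hM1 : ContDiffOn ℝ 2 M1 (Icc (-1) 1))
    (hode1 : ∀ y ∈ Ioo (-1 : ℝ) 1, l * deriv (deriv Q11) y =
      4 * Q11 y * ((Q11 y) ^ 2 - 1) - c * (M1 y) ^ 2)
    (hode2 : ∀ y ∈ Ioo (-1 : ℝ) 1, l * deriv (deriv M1) y =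
      M1 y * ((M1 y) ^ 2 - 1) - 2 * c * Q11 y * M1 y)
    (hbc1 : Q11 (-1) = 1) (hbc2 : M1 (-1) = 1)
    (hbc3 : Q11 1 = -1) (hbc4 : M1 1 = -1) :
    ∀ y ∈ Icc (-1 : ℝ) 1,
      |Q11 y| ≤ ρStar ∧ (M1 y) ^ 2 ≤ 1 + 2 * c * ρStar := by
  have hcQ := hQ11.continuousOn
  have hcM := hM1.continuousOn
  have hne : (Icc (-1 : ℝ) 1).Nonempty := ⟨1, by norm_num, le_rfl⟩
  have hnhds {y : ℝ} (hy : y ∈ Ioo (-1 : ℝ) 1) : Icc (-1 : ℝ) 1 ∈ nhds y :=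
    Icc_mem_nhds hy.1 hy.2
  have hinterior {y : ℝ} (hy : y ∈ Icc (-1 : ℝ) 1) (h₁ : y ≠ -1) (h₂ : y ≠ 1) :
      y ∈ Ioo (-1 : ℝ) 1 := ⟨lt_of_le_of_ne hy.1 h₁.symm, lt_of_le_of_ne hy.2 h₂⟩
  have hρone : 1 < ρStar := by
    by_contra! h
    nlinarith [mul_pos hρpos (pow_pos hc 2),
      mul_nonneg hρpos.le (mul_nonneg (sub_nonneg.2 h) (by linarith : 0 ≤ 1 + ρStar))]
  obtain ⟨q, hq, hqmax⟩ := isCompact_Icc.exists_isMaxOn hne hcQ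
  obtain ⟨p, hp, hpmin⟩ := isCompact_Icc.exists_isMinOn hne hcQ
  obtain ⟨m, hm, hmmax⟩ := isCompact_Icc.exists_isMaxOn hne (hcM.pow 2)
  have hqmax' : ∀ y ∈ Icc (-1 : ℝ) 1, Q11 y ≤ Q11 q := fun y hy => hqmax hy
  have hmmax' : ∀ y ∈ Icc (-1 : ℝ) 1, M1 y ^ 2 ≤ M1 m ^ 2 := fun y hy => hmmax hy
  have hqone : 1 ≤ Q11 q := by
    have := hqmax' (-1) ⟨le_rfl, by norm_num⟩
    linarith
  have hMbound : M1 m ^ 2 ≤ 1 + 2 * c * Q11 q := by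
    by_contra! hlt
    have hmQ := mul_le_mul_of_nonneg_left (hqmax' m hm) hc.le
    have hgt : 1 < M1 m ^ 2 := by nlinarith
    have hmI : m ∈ Ioo (-1 : ℝ) 1 := hinterior hm
      (by rintro rfl; norm_num [hbc2] at hgt) (by rintro rfl; norm_num [hbc4] at hgt)
    have hode := hode2 m hmI
    have hcont := hcM.continuousAt (hnhds hmI)
    have hfac : 0 < M1 m ^ 2 - 1 - 2 * c * Q11 m := by linarith
    rcases lt_trichotomy (M1 m) 0 with hneg | hzero | hpos
    · have hloc : IsLocalMin M1 m := by
        filter_upwards [hnhds hmI] with y hy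
        nlinarith [hmmax' y hy]
      have := hloc.deriv_deriv_nonneg hcont
      nlinarith [mul_nonneg hl.le this, mul_pos (neg_pos.2 hneg) hfac]
    · norm_num [hzero] at hgt
    · have hloc : IsLocalMax M1 m := by
        filter_upwards [hnhds hmI] with y hy
        nlinarith [hmmax' y hy]
      have := hloc.deriv_deriv_nonpos hcont
      nlinarith [mul_nonneg hl.le (neg_nonneg.2 this), mul_pos hpos hfac]
  have hQupper : Q11 q ≤ ρStar := by
    by_contra! hlt
    have hqI : q ∈ Ioo (-1 : ℝ) 1 := hinterior hq
      (by rintro rfl; linarith) (by rintro rfl; linarith)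
    have hnonpos := (hqmax.isLocalMax (hnhds hqI)).deriv_deriv_nonpos
      (hcQ.continuousAt (hnhds hqI))
    have hode := hode1 q hqI
    have hMq := mul_le_mul_of_nonneg_left ((hmmax' q hq).trans hMbound) hc.le
    have hcubic : Q11 q ^ 3 - (1 + c ^ 2 / 2) * Q11 q - c / 4 ≤ 0 := by
      nlinarith [mul_nonneg hl.le (neg_nonneg.2 hnonpos)]
    have hquad : 0 < ρStar ^ 2 - (1 + c ^ 2 / 2) := by
      by_contra! h
      nlinarith [mul_nonneg hρpos.le (sub_nonneg.2 h)]
    nlinarith [mul_pos (sub_pos.2 hlt) hquad,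
      mul_pos (sub_pos.2 hlt) (mul_pos (hρpos.trans hlt) (add_pos (hρpos.trans hlt) hρpos))]
  have hQlower : -1 ≤ Q11 p := by
    by_contra! hlt
    have hpI : p ∈ Ioo (-1 : ℝ) 1 := hinterior hp
      (by rintro rfl; linarith) (by rintro rfl; linarith)
    have hnonneg := (hpmin.isLocalMin (hnhds hpI)).deriv_deriv_nonneg
      (hcQ.continuousAt (hnhds hpI))
    have hode := hode1 p hpI
    have hsq : 0 < Q11 p ^ 2 - 1 := by nlinarith
    nlinarith [mul_nonneg hl.le hnonneg, mul_nonneg hc.le (sq_nonneg (M1 p)),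
      mul_pos (by linarith : 0 < -Q11 p) hsq]
  intro y hy
  have hpy : Q11 p ≤ Q11 y := hpmin hy
  refine ⟨abs_le.2 ⟨by linarith, (hqmax' y hy).trans hQupper⟩, ?_⟩
  nlinarith [hmmax' y hy, mul_le_mul_of_nonneg_left hQupper hc.le]
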